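/- Let A and A' be n×n integer matrices with determinant ±1 that are shift equivalent over ℤ (there exist integer matrices R, S and a positive integer l with A R = R A', S A = A' S, R S = A^l, S R = (A')^l). Then for every polynomial p(x) ∈ ℤ[x] with p(0) = ±1, the abelian groups ℤⁿ/p(A)ℤⁿ and ℤⁿ/p(A')ℤⁿ are isomorphic. -/

import Mathlib

/-!
A shift equivalence `(R, S)` intertwines `p(A)` and `p(A')`, so `S` induces a map
`ℤⁿ/p(A)ℤⁿ → ℤⁿ/p(A')ℤⁿ` and `R` one in the other direction; their composites are multiplication
by `A ^ l` and by `A' ^ l`. Since `p(0)` is a unit, `X ^ l` and `p` are coprime, so a Bézout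
identity `u X ^ l + v p = 1` makes `u(A)` an inverse of `A ^ l` modulo the image of `p(A)`, and
likewise for `A'`. Hence the map induced by `S` is bijective.
-/

open Polynomial

theorem isCoprime_X_of_isUnit_eval_zero {K : Type*} [CommRing K] {p : K[X]}
    (hp : IsUnit (p.eval 0)) : IsCoprime X p := by
  have hC : IsCoprime X (C (p.eval 0)) :=
    isCoprime_one_right.of_isCoprime_of_dvd_right (hp.map C).dvd
  rw [← divX_mul_X_add p, coeff_zero_eq_eval_zero, add_comm]
  exact hC.add_mul_right_right _

section Intertwining

variable {K M N : Type*} [CommSemiring K] [AddCommMonoid M] [Module K M] [AddCommMonoid N]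
  [Module K N] {f : Module.End K M} {g : Module.End K N} {φ : M →ₗ[K] N} {p q : K[X]}

theorem map_aeval_apply_of_comp_eq (hφ : φ ∘ₗ f = g ∘ₗ φ) (p : K[X]) (x : M) :
    φ (aeval f p x) = aeval g p (φ x) := by
  induction p using Polynomial.induction_on generalizing x with
  | C a => simp
  | add p q hp hq => simp [hp, hq]
  | monomial k a ih =>
    have hfg (y : M) : φ (f y) = g (φ y) := LinearMap.congr_fun hφ y
    simpa [pow_succ, hfg] using ih (f x)

theorem range_aeval_le_comap_of_comp_eq (hφ : φ ∘ₗ f = g ∘ₗ φ) (p : K[X]) :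
    LinearMap.range (aeval f p) ≤ (LinearMap.range (aeval g p)).comap φ := by
  rintro _ ⟨x, rfl⟩
  exact ⟨φ x, (map_aeval_apply_of_comp_eq hφ p x).symm⟩

theorem mem_range_aeval_of_isCoprime (hqp : IsCoprime q p) {x : M}
    (hx : aeval f q x ∈ LinearMap.range (aeval f p)) : x ∈ LinearMap.range (aeval f p) := by
  obtain ⟨u, v, huv⟩ := hqp
  obtain ⟨y, hy⟩ := hx
  refine ⟨aeval f u y + aeval f v x, ?_⟩
  calc aeval f p (aeval f u y + aeval f v x)
      = aeval f u (aeval f p y) + aeval f v (aeval f p x) := by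
        simp only [map_add, ← Module.End.mul_apply, ← map_mul, mul_comm]
    _ = aeval f (u * q + v * p) x := by
        simp only [hy, map_add, map_mul, LinearMap.add_apply, Module.End.mul_apply]
    _ = x := by rw [huv, map_one, Module.End.one_apply]

end Intertwining

section Cokernel

variable {K M N : Type*} [CommRing K] [AddCommGroup M] [Module K M] [AddCommGroup N] [Module K N]
  {f : Module.End K M} {g : Module.End K N} {φ : M →ₗ[K] N} {ψ : N →ₗ[K] M} {p q : K[X]}

theorem mapQ_range_aeval_injective (hφ : φ ∘ₗ f = g ∘ₗ φ) (hψ : ψ ∘ₗ g = f ∘ₗ ψ)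
    (hψφ : ψ ∘ₗ φ = aeval f q) (hqp : IsCoprime q p) :
    Function.Injective (Submodule.mapQ _ _ φ (range_aeval_le_comap_of_comp_eq hφ p)) := by
  have hcomap : (LinearMap.range (aeval g p)).comap φ ≤ LinearMap.range (aeval f p) := by
    intro x hx
    apply mem_range_aeval_of_isCoprime hqp
    rw [← hψφ]
    exact range_aeval_le_comap_of_comp_eq hψ p hx
  rw [← LinearMap.ker_eq_bot, Submodule.ker_mapQ,
    le_antisymm hcomap (range_aeval_le_comap_of_comp_eq hφ p), Submodule.mkQ_map_self]

theorem mapQ_range_aeval_surjective (hφ : φ ∘ₗ f = g ∘ₗ φ)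
    (hφψ : φ ∘ₗ ψ = aeval g q) (hqp : IsCoprime q p) :
    Function.Surjective (Submodule.mapQ _ _ φ (range_aeval_le_comap_of_comp_eq hφ p)) := by
  have hsup : LinearMap.range φ ⊔ LinearMap.range (aeval g p) = ⊤ := by
    rw [eq_top_iff, ← sup_aeval_range_eq_top_of_isCoprime g hqp, ← hφψ]
    exact sup_le_sup_right (LinearMap.range_comp_le_range ψ φ) _
  rw [← LinearMap.range_eq_top, Submodule.range_mapQ, Submodule.map_mkQ_eq_top, sup_comm, hsup]

theorem nonempty_quotient_range_aeval_equiv (hφ : φ ∘ₗ f = g ∘ₗ φ) (hψ : ψ ∘ₗ g = f ∘ₗ ψ)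
    (hψφ : ψ ∘ₗ φ = aeval f q) (hφψ : φ ∘ₗ ψ = aeval g q) (hqp : IsCoprime q p) :
    Nonempty ((M ⧸ LinearMap.range (aeval f p)) ≃ₗ[K] (N ⧸ LinearMap.range (aeval g p))) :=
  ⟨.ofBijective _ ⟨mapQ_range_aeval_injective hφ hψ hψφ hqp,
    mapQ_range_aeval_surjective hφ hφψ hqp⟩⟩

end Cokernel

theorem mulVecLin_aeval {K n : Type*} [CommSemiring K] [Fintype n] [DecidableEq n]
    (A : Matrix n n K) (p : K[X]) : (aeval A p).mulVecLin = aeval A.mulVecLin p :=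
  (aeval_algHom_apply Matrix.toLinAlgEquiv' A p).symm

theorem abelianized_invariant_of_shift_equivalence_general {K m n : Type*} [CommRing K]
    [Fintype m] [DecidableEq m] [Fintype n] [DecidableEq n]
    {A : Matrix m m K} {A' : Matrix n n K} {R : Matrix m n K} {S : Matrix n m K} {l : ℕ}
    (hR : A * R = R * A') (hS : S * A = A' * S) (hRS : R * S = A ^ l) (hSR : S * R = A' ^ l)
    {p : K[X]} (hp : IsUnit (p.eval 0)) :
    Nonempty (((m → K) ⧸ LinearMap.range (aeval A p).mulVecLin) ≃ₗ[K]
      ((n → K) ⧸ LinearMap.range (aeval A' p).mulVecLin)) := by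
  rw [mulVecLin_aeval, mulVecLin_aeval]
  apply nonempty_quotient_range_aeval_equiv (φ := S.mulVecLin) (ψ := R.mulVecLin) (q := X ^ l)
  · rw [← Matrix.mulVecLin_mul, hS, Matrix.mulVecLin_mul]
  · rw [← Matrix.mulVecLin_mul, ← hR, Matrix.mulVecLin_mul]
  · rw [← Matrix.mulVecLin_mul, hRS, ← mulVecLin_aeval, aeval_X_pow]
  · rw [← Matrix.mulVecLin_mul, hSR, ← mulVecLin_aeval, aeval_X_pow]
  · exact (isCoprime_X_of_isUnit_eval_zero hp).pow_left

/-- If the unimodular integer matrices `A, A'` are shift equivalent over `ℤ`,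
then for every polynomial `p(x) ∈ ℤ[x]` with `p(0) = ±1` the abelian groups `ℤⁿ/p(A)ℤⁿ` and
`ℤⁿ/p(A')ℤⁿ` are isomorphic. -/
theorem abelianized_invariant_of_shift_equivalence
    (n : ℕ) (A A' : Matrix (Fin n) (Fin n) ℤ)
    (hA : A.det = 1 ∨ A.det = -1) (hA' : A'.det = 1 ∨ A'.det = -1)
    (R S : Matrix (Fin n) (Fin n) ℤ) (l : ℕ) (hl : 0 < l)
    (h1 : A * R = R * A') (h2 : S * A = A' * S)
    (h3 : R * S = A ^ l) (h4 : S * R = A' ^ l)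
    (p : Polynomial ℤ) (hp : p.eval 0 = 1 ∨ p.eval 0 = -1) :
    Nonempty
      (((Fin n → ℤ) ⧸ LinearMap.range (Polynomial.aeval A p).mulVecLin) ≃+
       ((Fin n → ℤ) ⧸ LinearMap.range (Polynomial.aeval A' p).mulVecLin)) := by
  obtain ⟨e⟩ := abelianized_invariant_of_shift_equivalence_general h1 h2 h3 h4
    (Int.isUnit_iff.mpr hp)
  exact ⟨e.toAddEquiv⟩
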